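/- Let F : ℝ^N → ℝ^N be continuous and suppose |F(y) - y| = o(|y|) as |y| → ∞. Then F is proper (preimages of compact sets are compact) and surjective. -/

import Mathlib

/-!
The degree theory needed is supplied by the Milnor–Rogers argument. If a `C¹` map `f` is the
identity on the frontier of a compact set `s`, then `t ↦ ∫_s det (id + t D(f - id))` is a
polynomial. For small `t` the map `id + t (f - id)` is a bijection of `s` with positive Jacobian,
so the polynomial takes the value `vol s` near `0`, hence also at `t = 1`. A map of constant nonzero
norm has zero Jacobian, so no `C¹` map sends a ball to its boundary sphere and fixes that sphere.
Smoothing and normalising a hypothetical map without zeros, one concludes that a continuous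
self-map which is the identity off a compact set is surjective.

Given a target `x`, a cut-off `b` turns `F` into `H y = y + b y • (F y - y)`, which is the identity
far out. As `‖F y - y‖ ≤ c ‖y‖` with `c < 1`, every value `H y` with `‖y‖` large has norm at least
`(1 - c) ‖y‖ > ‖x‖`, so `H` attains `x` at a point where `b = 1`, that is, where `H = F`. The same
lower bound for `‖F y‖` gives properness.
-/

open Asymptotics Filter Function MeasureTheory Metric Module Polynomial Set
open scoped NNReal RealInnerProductSpace Topology

theorem nonempty_inter_frontier_of_isPreconnected {X : Type*} [TopologicalSpace X] {s t : Set X}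
    (ht : IsPreconnected t) (hts : (t ∩ s).Nonempty) (htsc : (t ∩ sᶜ).Nonempty) :
    (t ∩ frontier s).Nonempty := by
  rw [frontier_eq_closure_inter_closure]
  refine isPreconnected_closed_iff.1 ht _ _ isClosed_closure isClosed_closure ?_
    (hts.mono (by gcongr; exact subset_closure)) (htsc.mono (by gcongr; exact subset_closure))
  calc t ⊆ s ∪ sᶜ := by simp
    _ ⊆ closure s ∪ closure sᶜ := union_subset_union subset_closure subset_closure

theorem lipschitzWith_indicator_of_eqOn_frontier {E F : Type*} [SeminormedAddCommGroup E]
    [NormedSpace ℝ E] [SeminormedAddCommGroup F] {s : Set E} {k : E → F} {C : ℝ≥0}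
    (hs : IsClosed s) (hk : LipschitzOnWith C k s) (h0 : EqOn k 0 (frontier s)) :
    LipschitzWith C (s.indicator k) := by
  have norm_le_of_crossing : ∀ x ∈ s, ∀ y ∉ s, ‖k x‖ ≤ C * ‖x - y‖ := by
    intro x hx y hy
    obtain ⟨z, hz, hzs⟩ := nonempty_inter_frontier_of_isPreconnected
      (convex_segment (𝕜 := ℝ) x y).isPreconnected ⟨x, left_mem_segment ℝ x y, hx⟩
      ⟨y, right_mem_segment ℝ x y, hy⟩
    calc ‖k x‖ = ‖k x - k z‖ := by rw [h0 hzs, Pi.zero_apply, sub_zero]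
      _ ≤ C * ‖x - z‖ := hk.norm_sub_le hx (hs.frontier_subset hzs)
      _ ≤ C * ‖x - y‖ := by
        rw [norm_sub_rev x z, norm_sub_rev x y]
        gcongr
        exact norm_sub_le_of_mem_segment hz
  refine LipschitzWith.of_dist_le_mul fun x y => ?_
  rw [dist_eq_norm, dist_eq_norm]
  by_cases hx : x ∈ s <;> by_cases hy : y ∈ s
  · simpa only [indicator_of_mem, hx, hy] using hk.norm_sub_le hx hy
  · simpa [hx, hy] using norm_le_of_crossing x hx y hy
  · simpa [hx, hy, norm_sub_rev x y] using norm_le_of_crossing y hy x hx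
  · simpa [hx, hy] using mul_nonneg C.coe_nonneg (norm_nonneg (x - y))

theorem bijective_add_of_lipschitzWith {E : Type*} [NormedAddCommGroup E] [CompleteSpace E]
    {k : E → E} {C : ℝ≥0} (hC : C < 1) (hk : LipschitzWith C k) : Bijective fun y => y + k y := by
  refine (bijective_iff_existsUnique _).2 fun z => ?_
  -- The preimages of `z` are the fixed points of the contraction `y ↦ z - k y`.
  have hcontr : ContractingWith C fun y => z - k y :=
    ⟨hC, by simpa using (LipschitzWith.const z).sub hk⟩
  refine ⟨hcontr.fixedPoint, eq_sub_iff_add_eq.1 hcontr.fixedPoint_isFixedPt.symm, fun y hy => ?_⟩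
  exact hcontr.fixedPoint_unique (eq_sub_iff_add_eq.2 hy).symm

theorem bijOn_add_of_lipschitzOnWith_of_eqOn_frontier {E : Type*} [NormedAddCommGroup E]
    [NormedSpace ℝ E] [CompleteSpace E] {s : Set E} {k : E → E} {C : ℝ≥0} (hs : IsClosed s)
    (hC : C < 1) (hk : LipschitzOnWith C k s) (h0 : EqOn k 0 (frontier s)) :
    BijOn (fun y => y + k y) s s := by
  have hbij : Bijective fun y => y + s.indicator k y :=
    bijective_add_of_lipschitzWith hC (lipschitzWith_indicator_of_eqOn_frontier hs hk h0)
  have hid : BijOn (fun y => y + s.indicator k y) sᶜ sᶜ :=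
    (bijOn_id sᶜ).congr fun y hy => by simp [indicator_of_notMem hy]
  have hs_bij : BijOn (fun y => y + s.indicator k y) s s := by
    simpa only [compl_compl] using hid.compl hbij
  exact hs_bij.congr fun y hy => by simp [indicator_of_mem hy]

theorem exists_natDegree_le_eval_eq_det_smul_add {R M : Type*} [CommRing R] [AddCommGroup M]
    [Module R M] [Module.Free R M] [Module.Finite R M] (A B : M →ₗ[R] M) :
    ∃ p : R[X], p.natDegree ≤ finrank R M ∧ ∀ t, p.eval t = LinearMap.det (t • A + B) := by
  nontriviality R
  let b := Free.chooseBasis R M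
  let a := LinearMap.toMatrix b b A
  let a₀ := LinearMap.toMatrix b b B
  refine ⟨((X : R[X]) • a.map C + a₀.map C).det, ?_, fun t => ?_⟩
  · rw [finrank_eq_card_chooseBasisIndex]
    exact natDegree_det_X_add_C_le a a₀
  · rw [← LinearMap.det_toMatrix b, map_add, map_smul, ← coe_evalRingHom, RingHom.map_det]
    congr 1
    ext i j
    simp only [RingHom.mapMatrix_apply, Matrix.map_apply, Matrix.add_apply, Matrix.smul_apply,
      smul_eq_mul, coe_evalRingHom, eval_add, eval_mul, eval_X, eval_C, a, a₀]

theorem exists_eval_eq_integral {α 𝕜 : Type*} [RCLike 𝕜] [MeasurableSpace α] {μ : Measure α}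
    {n : ℕ} {P : α → 𝕜[X]} (hdeg : ∀ x, (P x).natDegree ≤ n)
    (hint : ∀ t, Integrable (fun x => (P x).eval t) μ) :
    ∃ q : 𝕜[X], ∀ t, q.eval t = ∫ x, (P x).eval t ∂μ := by
  -- Lagrange interpolation at `n + 1` fixed nodes expresses `(P x).eval t` as a linear combination
  -- of node values whose coefficients do not depend on `x`.
  let nodes : Finset ℕ := Finset.range (n + 1)
  have hinj : InjOn (Nat.cast : ℕ → 𝕜) nodes := Nat.cast_injective.injOn
  have hdeg_lt : ∀ x, (P x).degree < nodes.card := fun x => by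
    rw [Finset.card_range]
    exact degree_le_natDegree.trans_lt (by exact_mod_cast Nat.lt_succ_of_le (hdeg x))
  refine ⟨Lagrange.interpolate nodes Nat.cast fun i => ∫ x, (P x).eval (i : 𝕜) ∂μ, fun t => ?_⟩
  have heval : ∀ x, (P x).eval t =
      ∑ i ∈ nodes, (P x).eval (i : 𝕜) * (Lagrange.basis nodes Nat.cast i).eval t := fun x => by
    conv_lhs => rw [Lagrange.eq_interpolate hinj (hdeg_lt x)]
    simp only [Lagrange.interpolate_apply, eval_finsetSum, eval_mul, eval_C]
  rw [integral_congr_ae (.of_forall heval),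
    integral_finsetSum _ fun (i : ℕ) _ => (hint i).mul_const _]
  simp only [integral_mul_const, Lagrange.interpolate_apply, eval_finsetSum, eval_mul, eval_C]

section Jacobian

variable {E : Type*} [NormedAddCommGroup E] [NormedSpace ℝ E] {s : Set E} {k f : E → E}

theorem continuous_det_smul_fderiv_add_id (hk : ContDiff ℝ 1 k) :
    Continuous fun p : ℝ × E => (p.1 • fderiv ℝ k p.2 + ContinuousLinearMap.id ℝ E).det := by
  have := hk.continuous_fderiv one_ne_zero
  exact ContinuousLinearMap.continuous_det.comp (by fun_prop)

variable [FiniteDimensional ℝ E] [MeasurableSpace E] [BorelSpace E] (μ : Measure E)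
  [μ.IsAddHaarMeasure]

theorem setIntegral_det_fderiv_eq_of_bijOn {t : Set E} {f' : E → E →L[ℝ] E} (hs : MeasurableSet s)
    (hf' : ∀ y ∈ s, HasFDerivWithinAt f (f' y) s y) (hpos : ∀ y ∈ s, 0 ≤ (f' y).det)
    (hf : BijOn f s t) : ∫ y in s, (f' y).det ∂μ = μ.real t := by
  calc ∫ y in s, (f' y).det ∂μ = ∫ y in s, |(f' y).det| • (1 : ℝ) ∂μ :=
        setIntegral_congr_fun hs fun y hy => by simp [abs_of_nonneg (hpos y hy)]
    _ = ∫ _ in f '' s, (1 : ℝ) ∂μ :=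
        (integral_image_eq_integral_abs_det_fderiv_smul μ hs hf' hf.injOn fun _ => 1).symm
    _ = μ.real t := by rw [hf.image_eq, setIntegral_one_eq_measureReal]

theorem eventually_setIntegral_det_smul_fderiv_add_id_eq (hs : IsCompact s) (hk : ContDiff ℝ 1 k)
    (h0 : EqOn k 0 (frontier s)) :
    ∀ᶠ t : ℝ in 𝓝 0,
      ∫ y in s, (t • fderiv ℝ k y + ContinuousLinearMap.id ℝ E).det ∂μ = μ.real s := by
  obtain ⟨C, hC⟩ : ∃ C, LipschitzOnWith C k s :=
    hk.locallyLipschitz.locallyLipschitzOn.exists_lipschitzOnWith_of_compact hs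
  have hcontr : ∀ᶠ t : ℝ in 𝓝 0, ‖t‖₊ * C < 1 :=
    (by fun_prop : Continuous fun t : ℝ => ‖t‖₊ * C).continuousAt.eventually_lt_const (by simp)
  have hpos : ∀ᶠ t : ℝ in 𝓝 0,
      ∀ y ∈ s, 0 < (t • fderiv ℝ k y + ContinuousLinearMap.id ℝ E).det :=
    hs.eventually_forall_of_forall_eventually fun y _ =>
      (continuous_det_smul_fderiv_add_id hk).continuousAt.eventually_const_lt
        (by simp [ContinuousLinearMap.det])
  filter_upwards [hcontr, hpos] with t htC htpos
  have hlip : LipschitzOnWith (‖t‖₊ * C) (t • k) s :=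
    (lipschitzWith_smul t).comp_lipschitzOnWith hC
  refine setIntegral_det_fderiv_eq_of_bijOn μ hs.measurableSet (f := fun y => y + (t • k) y)
    (fun y _ => ?_) (fun y hy => (htpos y hy).le)
    (bijOn_add_of_lipschitzOnWith_of_eqOn_frontier hs.isClosed htC hlip fun y hy => by simp [h0 hy])
  have hky := (hk.differentiable one_ne_zero y).hasFDerivAt
  rw [add_comm]
  exact ((hasFDerivAt_id y).add (hky.const_smul t)).hasFDerivWithinAt

theorem setIntegral_det_fderiv_eq_of_eqOn_frontier (hs : IsCompact s) (hf : ContDiff ℝ 1 f)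
    (hid : EqOn f id (frontier s)) : ∫ y in s, (fderiv ℝ f y).det ∂μ = μ.real s := by
  let k : E → E := f - id
  have hk : ContDiff ℝ 1 k := hf.sub contDiff_id
  have hfderiv : ∀ y, (1 : ℝ) • fderiv ℝ k y + ContinuousLinearMap.id ℝ E = fderiv ℝ f y :=
    fun y => by
      rw [fderiv_sub (hf.differentiable one_ne_zero y) differentiableAt_id, fderiv_id, one_smul,
        sub_add_cancel]
  choose P hdeg hP using fun y =>
    exists_natDegree_le_eval_eq_det_smul_add (fderiv ℝ k y : E →ₗ[ℝ] E) LinearMap.id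
  have hPdet : ∀ t y, (P y).eval t = (t • fderiv ℝ k y + ContinuousLinearMap.id ℝ E).det :=
    fun t y => hP y t
  have hint : ∀ t, IntegrableOn (fun y => (P y).eval t) s μ := fun t => by
    simp_rw [hPdet]
    exact ((continuous_det_smul_fderiv_add_id hk).comp
      (Continuous.prodMk_right t)).continuousOn.integrableOn_compact hs
  obtain ⟨q, hq⟩ := exists_eval_eq_integral hdeg hint
  have hq_nhds : ∀ᶠ t in 𝓝 0, q.eval t = (C (μ.real s)).eval t := by
    simp_rw [hq, hPdet, eval_C]
    exact eventually_setIntegral_det_smul_fderiv_add_id_eq μ hs hk fun y hy => by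
      simp [k, hid hy]
  have hq_const : q = C (μ.real s) :=
    eq_of_infinite_eval_eq _ _ (infinite_of_mem_nhds 0 hq_nhds)
  calc ∫ y in s, (fderiv ℝ f y).det ∂μ = q.eval 1 := by simp_rw [hq, hPdet, hfderiv]
    _ = μ.real s := by rw [hq_const, eval_C]

end Jacobian

section InnerProductSpace

variable {E : Type*} [NormedAddCommGroup E] [InnerProductSpace ℝ E] [FiniteDimensional ℝ E]
  {f : E → E} {R : ℝ}

theorem det_eq_zero_of_eventually_norm_eq {f' : E →L[ℝ] E} {x : E} (hf : HasFDerivAt f f' x)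
    (hR : R ≠ 0) (hnorm : ∀ᶠ y in 𝓝 x, ‖f y‖ = R) : f'.det = 0 := by
  by_contra hdet
  have horth : ∀ v, ⟪f x, f' v⟫ = 0 := fun v => by
    have hconst : HasFDerivAt (fun y => ‖f y‖ ^ 2) (0 : E →L[ℝ] ℝ) x :=
      (hasFDerivAt_const (R ^ 2) x).congr_of_eventuallyEq (hnorm.mono fun y hy => by simp [hy])
    simpa using DFunLike.congr_fun (hf.norm_sq.unique hconst) v
  obtain ⟨v, hv⟩ : ∃ v, f' v = f x :=
    (LinearMap.equivOfDetNeZero (f' : E →ₗ[ℝ] E) hdet).surjective (f x)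
  have hfx : f x = 0 := inner_self_eq_zero.1 (hv ▸ horth v)
  exact hR (by rw [← hnorm.self_of_nhds, hfx, norm_zero])

theorem exists_mem_ball_norm_ne_of_eqOn_sphere (hR : 0 < R) (hf : ContDiff ℝ 1 f)
    (hid : EqOn f id (sphere 0 R)) : ∃ y ∈ ball (0 : E) R, ‖f y‖ ≠ R := by
  borelize E
  let μ : Measure E := Measure.addHaar
  by_contra! hnorm
  have hdet : ∀ y ∈ ball (0 : E) R, (fderiv ℝ f y).det = 0 := fun y hy =>
    det_eq_zero_of_eventually_norm_eq (hf.differentiable one_ne_zero y).hasFDerivAt hR.ne'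
      (eventually_of_mem (isOpen_ball.mem_nhds hy) hnorm)
  have hball : ball (0 : E) R =ᵐ[μ] closedBall 0 R := by
    rw [← interior_closedBall 0 hR.ne']
    exact interior_ae_eq_of_null_frontier ((convex_closedBall 0 R).addHaar_frontier μ)
  have hvol : μ.real (closedBall 0 R) = 0 := by
    rw [← setIntegral_det_fderiv_eq_of_eqOn_frontier μ (isCompact_closedBall 0 R) hf
      (by rwa [frontier_closedBall 0 hR.ne']), ← setIntegral_congr_set hball]
    exact setIntegral_eq_zero_of_forall_eq_zero hdet
  have hpos : 0 < μ.real (closedBall 0 R) :=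
    ENNReal.toReal_pos (measure_closedBall_pos μ 0 hR).ne' measure_closedBall_lt_top.ne
  exact hpos.ne' hvol

theorem exists_eq_zero_of_contDiff_of_eventuallyEq_id (hf : ContDiff ℝ 1 f)
    (hid : f =ᶠ[cocompact E] id) : ∃ y, f y = 0 := by
  by_contra! hne
  obtain ⟨R, hR, hidR⟩ : ∃ R > 0, ∀ y, R ≤ ‖y‖ → f y = y := by
    rw [← cobounded_eq_cocompact] at hid
    obtain ⟨R, -, hR⟩ := hasBasis_cobounded_norm.eventually_iff.1 hid
    exact ⟨max R 1, by positivity, fun y hy => hR ((le_max_left _ _).trans hy)⟩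
  let retraction : E → E := fun y => (R * ‖f y‖⁻¹) • f y
  have hnorm : ∀ y, ‖retraction y‖ = R := fun y => by
    have := norm_ne_zero_iff.2 (hne y)
    simp [retraction, norm_smul, abs_of_pos hR, this]
  have hsmooth : ContDiff ℝ 1 retraction :=
    (contDiff_const.mul ((hf.norm ℝ hne).inv fun y => norm_ne_zero_iff.2 (hne y))).smul hf
  have hsphere : EqOn retraction id (sphere 0 R) := fun y hy => by
    have hy : ‖y‖ = R := mem_sphere_zero_iff_norm.1 hy
    simp [retraction, hidR y hy.ge, hy, hR.ne']
  obtain ⟨y, -, hy⟩ := exists_mem_ball_norm_ne_of_eqOn_sphere hR hsmooth hsphere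
  exact hy (hnorm y)

theorem exists_eq_zero_of_eventuallyEq_id (hf : Continuous f) (hid : f =ᶠ[cocompact E] id) :
    ∃ y, f y = 0 := by
  by_contra! hne
  obtain ⟨g, hg, hgdist, hgsupp⟩ := (hf.sub continuous_id).exists_contDiff_approx 1
    hf.norm fun y => norm_pos_iff.2 (hne y)
  have hg_id : id + g =ᶠ[cocompact E] id := by
    filter_upwards [hid] with y hy
    have : g y = 0 := notMem_support.1 fun h => hgsupp h (by simp [hy])
    simp [this]
  obtain ⟨y, hy⟩ := exists_eq_zero_of_contDiff_of_eventuallyEq_id (contDiff_id.add hg) hg_id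
  have hgy : g y = -y := eq_neg_of_add_eq_zero_right hy
  have := hgdist y
  simp [hgy, dist_eq_norm, neg_sub_left] at this

end InnerProductSpace

theorem surjective_of_eventuallyEq_id {E : Type*} [AddCommGroup E] [TopologicalSpace E]
    [IsTopologicalAddGroup E] [T2Space E] [Module ℝ E] [ContinuousSMul ℝ E]
    [FiniteDimensional ℝ E] {f : E → E} (hf : Continuous f) (hid : f =ᶠ[cocompact E] id) :
    Surjective f := by
  intro x
  let e : E ≃ₜ EuclideanSpace ℝ (Fin (finrank ℝ E)) :=
    (Homeomorph.subRight x).trans toEuclidean.toHomeomorph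
  have he : e x = 0 := by simp [e]
  have hconj : e ∘ f ∘ e.symm =ᶠ[cocompact _] id := by
    filter_upwards [e.symm.isClosedEmbedding.tendsto_cocompact.eventually hid] with y hy
    simp [hy]
  obtain ⟨y, hy⟩ := exists_eq_zero_of_eventuallyEq_id (by fun_prop) hconj
  exact ⟨e.symm y, e.injective (hy.trans he.symm)⟩

theorem tendsto_cocompact_of_norm_sub_le {E : Type*} [NormedAddCommGroup E] [ProperSpace E]
    {F : E → E} {c : ℝ} (hc : c < 1) (hF : ∀ᶠ y in cocompact E, ‖F y - y‖ ≤ c * ‖y‖) :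
    Tendsto F (cocompact E) (cocompact E) := by
  have hlower : ∀ᶠ y in cocompact E, (1 - c) * ‖y‖ ≤ ‖F y‖ := by
    filter_upwards [hF] with y hy
    linarith [norm_sub_norm_le y (F y), norm_sub_rev y (F y)]
  rw [← cobounded_eq_cocompact] at hlower ⊢
  exact tendsto_norm_atTop_iff_cobounded.1 <| tendsto_atTop_mono' _ hlower <|
    tendsto_norm_cobounded_atTop.const_mul_atTop (sub_pos.2 hc)

section Asymptotic

variable {E : Type*} [NormedAddCommGroup E] [NormedSpace ℝ E] [FiniteDimensional ℝ E]
  {F : E → E} {c : ℝ}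

theorem surjective_of_norm_sub_le (hc : c < 1) (hcont : Continuous F)
    (hF : ∀ᶠ y in cocompact E, ‖F y - y‖ ≤ c * ‖y‖) : Surjective F := by
  have := FiniteDimensional.proper_real E
  intro x
  have hlarge : ∀ᶠ y in cocompact E, ‖x‖ < (1 - c) * ‖y‖ :=
    (tendsto_norm_cocompact_atTop.const_mul_atTop (sub_pos.2 hc)).eventually_gt_atTop ‖x‖
  obtain ⟨K, hK, hKc⟩ := mem_cocompact.1 (hF.and hlarge)
  obtain ⟨b, hb1, -, hbsupp, hb01⟩ :=
    exists_continuous_one_zero_of_isCompact hK isClosed_empty (disjoint_empty K)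
  let H : E → E := fun y => y + b y • (F y - y)
  have hHid : H =ᶠ[cocompact E] id := by
    rw [hasCompactSupport_iff_eventuallyEq, coclosedCompact_eq_cocompact] at hbsupp
    filter_upwards [hbsupp] with y hy
    simp [H, hy]
  obtain ⟨y, hy⟩ := surjective_of_eventuallyEq_id (by fun_prop) hHid x
  by_cases hyK : y ∈ K
  · exact ⟨y, by simpa [H, hb1 hyK] using hy⟩
  · obtain ⟨hFy, hxy⟩ := hKc hyK
    have hle : ‖y‖ ≤ ‖x‖ + c * ‖y‖ := calc
      ‖y‖ = ‖x - b y • (F y - y)‖ := by rw [← hy, add_sub_cancel_right]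
      _ ≤ ‖x‖ + b y * ‖F y - y‖ := by
        simpa [norm_smul, abs_of_nonneg (hb01 y).1] using norm_sub_le x (b y • (F y - y))
      _ ≤ ‖x‖ + ‖F y - y‖ := by
        gcongr
        exact mul_le_of_le_one_left (norm_nonneg _) (hb01 y).2
      _ ≤ ‖x‖ + c * ‖y‖ := by gcongr
    linarith

theorem stmt8_general (hc : c < 1) (hcont : Continuous F)
    (hF : ∀ᶠ y in cocompact E, ‖F y - y‖ ≤ c * ‖y‖) : IsProperMap F ∧ Surjective F :=
  have := FiniteDimensional.proper_real E
  ⟨isProperMap_iff_tendsto_cocompact.2 ⟨hcont, tendsto_cocompact_of_norm_sub_le hc hF⟩,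
    surjective_of_norm_sub_le hc hcont hF⟩

end Asymptotic

theorem stmt8 {N : ℕ} (F : EuclideanSpace ℝ (Fin N) → EuclideanSpace ℝ (Fin N))
    (hF : Continuous F)
    (ho : Filter.Tendsto (fun y => ‖F y - y‖ / ‖y‖)
      (Filter.cocompact (EuclideanSpace ℝ (Fin N))) (nhds 0)) :
    (∀ K : Set (EuclideanSpace ℝ (Fin N)), IsCompact K → IsCompact (F ⁻¹' K)) ∧
      Function.Surjective F := by
  have hlittle : (fun y => F y - y) =o[cocompact _] id :=
    isLittleO_norm_norm.1 <| isLittleO_of_tendsto'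
      (mem_of_superset (isCompact_singleton (x := 0)).compl_mem_cocompact
        fun _ hy h => absurd (norm_eq_zero.1 h) hy) ho
  exact (stmt8_general one_half_lt_one hF (hlittle.def one_half_pos)).imp_left
    fun h _ hK => h.isCompact_preimage hK
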